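/- For any y ∈ ℝ^{n−1} with x = ψ†(y), the gradient of the auxiliary function satisfies ∇φ(y) = Qᵀ∇Rq(x)/(1 + ‖y‖²)^{1/2}, where ∇Rq(x) = 2(Ax − Rq(x)Mx) and ∇φ(y) = (2/(yᵀy+1))·(By − φ(y)y + b). -/

import Mathlib

open Matrix

noncomputable def Mnorm {n : ℕ} (M : Matrix (Fin n) (Fin n) ℝ) (x : Fin n → ℝ) : ℝ :=
  Real.sqrt (x ⬝ᵥ (M *ᵥ x))

noncomputable def Rq {n : ℕ} (A M : Matrix (Fin n) (Fin n) ℝ) (x : Fin n → ℝ) : ℝ :=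
  (x ⬝ᵥ (A *ᵥ x)) / (x ⬝ᵥ (M *ᵥ x))

/-- ψ(x) = QᵀMx / (qᵀMx) -/
noncomputable def psiMap {n m : ℕ} (M : Matrix (Fin n) (Fin n) ℝ) (q : Fin n → ℝ)
    (Q : Matrix (Fin n) (Fin m) ℝ) (x : Fin n → ℝ) : Fin m → ℝ :=
  (q ⬝ᵥ (M *ᵥ x))⁻¹ • ((Qᵀ * M) *ᵥ x)

/-- ψ†(y) = (Qy + q)/‖Qy + q‖_M -/
noncomputable def psiDag {n m : ℕ} (M : Matrix (Fin n) (Fin n) ℝ) (q : Fin n → ℝ)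
    (Q : Matrix (Fin n) (Fin m) ℝ) (y : Fin m → ℝ) : Fin n → ℝ :=
  (Mnorm M (Q *ᵥ y + q))⁻¹ • (Q *ᵥ y + q)

/-- The hemisphere S₊ = {x : ‖x‖_M = 1, qᵀMx > 0}. -/
def Splus {n : ℕ} (M : Matrix (Fin n) (Fin n) ℝ) (q : Fin n → ℝ) : Set (Fin n → ℝ) :=
  {x | Mnorm M x = 1 ∧ 0 < q ⬝ᵥ (M *ᵥ x)}

/-- X = {x ∈ S₊ : Rq(x) ≤ Rq(q)}. -/
def Xset {n : ℕ} (A M : Matrix (Fin n) (Fin n) ℝ) (q : Fin n → ℝ) : Set (Fin n → ℝ) :=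
  {x | x ∈ Splus M q ∧ Rq A M x ≤ Rq A M q}

/-- φ(y) = (yᵀBy + 2yᵀb + ρ)/(yᵀy + 1). -/
noncomputable def phiAux {m : ℕ} (B : Matrix (Fin m) (Fin m) ℝ) (b : Fin m → ℝ) (ρ : ℝ)
    (y : Fin m → ℝ) : ℝ :=
  (y ⬝ᵥ (B *ᵥ y) + 2 * (y ⬝ᵥ b) + ρ) / (y ⬝ᵥ y + 1)

/-- ∇φ(y) = (2/(yᵀy+1))(By − φ(y)y + b). -/
noncomputable def gradPhi {m : ℕ} (B : Matrix (Fin m) (Fin m) ℝ) (b : Fin m → ℝ) (ρ : ℝ)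
    (y : Fin m → ℝ) : Fin m → ℝ :=
  (2 / (y ⬝ᵥ y + 1)) • (B *ᵥ y - phiAux B b ρ y • y + b)

/-! In the chart `y ↦ Q y + q` the function `φ` is the Rayleigh quotient, so by the chain rule
`∇φ(y) = Qᵀ ∇Rq(Q y + q)`. Since `Rq` is invariant under scaling, `∇Rq` is homogeneous of degree
`-1`, and normalizing `Q y + q`, of `M`-norm `√(1 + ‖y‖²)`, to `ψ†(y)` produces the factor
`1 / √(1 + ‖y‖²)`. -/

section QuadraticForm

variable {R ι κ : Type*} [CommSemiring R] [Fintype ι] [Fintype κ] {S : Matrix ι ι R}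

lemma add_dotProduct_mulVec_add_of_isSymm (hS : S.IsSymm) (u v : ι → R) :
    (u + v) ⬝ᵥ S *ᵥ (u + v) = u ⬝ᵥ S *ᵥ u + 2 * (u ⬝ᵥ S *ᵥ v) + v ⬝ᵥ S *ᵥ v := by
  have cross : v ⬝ᵥ S *ᵥ u = u ⬝ᵥ S *ᵥ v := by
    rw [← dotProduct_transpose_mulVec, hS.eq]
  simp only [mulVec_add, dotProduct_add, add_dotProduct, cross]
  ring

lemma mulVec_dotProduct_eq_dotProduct_transpose_mulVec (Q : Matrix ι κ R) (y : κ → R)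
    (v : ι → R) :
    (Q *ᵥ y) ⬝ᵥ v = y ⬝ᵥ Qᵀ *ᵥ v := by
  rw [dotProduct_transpose_mulVec, dotProduct_comm]

lemma affine_dotProduct_mulVec_affine_of_isSymm (hS : S.IsSymm) (Q : Matrix ι κ R) (q : ι → R)
    (y : κ → R) :
    (Q *ᵥ y + q) ⬝ᵥ S *ᵥ (Q *ᵥ y + q) =
      y ⬝ᵥ (Qᵀ * S * Q) *ᵥ y + 2 * (y ⬝ᵥ (Qᵀ * S) *ᵥ q) + q ⬝ᵥ S *ᵥ q := by
  simp only [add_dotProduct_mulVec_add_of_isSymm hS,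
    mulVec_dotProduct_eq_dotProduct_transpose_mulVec, mulVec_mulVec, Matrix.mul_assoc]

lemma transpose_mulVec_mulVec_affine (S : Matrix ι ι R) (Q : Matrix ι κ R) (q : ι → R)
    (y : κ → R) :
    Qᵀ *ᵥ (S *ᵥ (Q *ᵥ y + q)) = (Qᵀ * S * Q) *ᵥ y + (Qᵀ * S) *ᵥ q := by
  simp only [mulVec_add, mulVec_mulVec, Matrix.mul_assoc]

lemma smul_dotProduct_mulVec_smul (S : Matrix ι ι R) (c : R) (x : ι → R) :
    (c • x) ⬝ᵥ S *ᵥ (c • x) = c ^ 2 * (x ⬝ᵥ S *ᵥ x) := by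
  simp only [mulVec_smul, dotProduct_smul, smul_dotProduct, smul_eq_mul]
  ring

end QuadraticForm

section RayleighQuotient

variable {n : ℕ}

/-- The gradient `(2 / xᵀMx) (A x - Rq(x) M x)` of the Rayleigh quotient at an arbitrary `x`, for
symmetric `A` and `M`; the formula `2 (A x - Rq(x) M x)` is its value on the `M`-unit sphere.
At vectors with `xᵀMx = 0` it takes the junk value `0`. -/
noncomputable def gradRq (A M : Matrix (Fin n) (Fin n) ℝ) (x : Fin n → ℝ) : Fin n → ℝ :=
  (2 / (x ⬝ᵥ M *ᵥ x)) • (A *ᵥ x - Rq A M x • M *ᵥ x)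

lemma Rq_smul (A M : Matrix (Fin n) (Fin n) ℝ) {c : ℝ} (hc : c ≠ 0) (x : Fin n → ℝ) :
    Rq A M (c • x) = Rq A M x := by
  simp only [Rq, smul_dotProduct_mulVec_smul]
  exact mul_div_mul_left _ _ (pow_ne_zero 2 hc)

lemma gradRq_smul (A M : Matrix (Fin n) (Fin n) ℝ) {c : ℝ} (hc : c ≠ 0) (x : Fin n → ℝ) :
    gradRq A M (c • x) = c⁻¹ • gradRq A M x := by
  have hresidual : A *ᵥ (c • x) - Rq A M x • M *ᵥ (c • x) =
      c • (A *ᵥ x - Rq A M x • M *ᵥ x) := by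
    rw [mulVec_smul, mulVec_smul, smul_comm (Rq A M x) c, smul_sub]
  rw [gradRq, Rq_smul A M hc, smul_dotProduct_mulVec_smul, hresidual, gradRq, smul_smul, smul_smul]
  congr 1
  field_simp

lemma gradRq_of_dotProduct_mulVec_eq_one (A : Matrix (Fin n) (Fin n) ℝ)
    {M : Matrix (Fin n) (Fin n) ℝ} {x : Fin n → ℝ} (hx : x ⬝ᵥ M *ᵥ x = 1) :
    gradRq A M x = (2 : ℝ) • (A *ᵥ x - Rq A M x • M *ᵥ x) := by
  rw [gradRq, hx, div_one]

lemma normalize_dotProduct_mulVec_normalize {M : Matrix (Fin n) (Fin n) ℝ} {x : Fin n → ℝ}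
    (hx : 0 < x ⬝ᵥ M *ᵥ x) :
    ((Mnorm M x)⁻¹ • x) ⬝ᵥ M *ᵥ ((Mnorm M x)⁻¹ • x) = 1 := by
  rw [smul_dotProduct_mulVec_smul, Mnorm, inv_pow, Real.sq_sqrt hx.le, inv_mul_cancel₀ hx.ne']

end RayleighQuotient

section Chart

variable {n m : ℕ} {A M : Matrix (Fin n) (Fin n) ℝ} {q : Fin n → ℝ} {Q : Matrix (Fin n) (Fin m) ℝ}

lemma affine_dotProduct_mulVec_affine_of_orthonormal (hM : M.IsSymm) (hq : q ⬝ᵥ M *ᵥ q = 1)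
    (hQMQ : Qᵀ * M * Q = 1) (hQMq : (Qᵀ * M) *ᵥ q = 0) (y : Fin m → ℝ) :
    (Q *ᵥ y + q) ⬝ᵥ M *ᵥ (Q *ᵥ y + q) = y ⬝ᵥ y + 1 := by
  rw [affine_dotProduct_mulVec_affine_of_isSymm hM, hQMQ, hQMq, hq, one_mulVec, dotProduct_zero,
    mul_zero, add_zero]

lemma Rq_affine_eq_phiAux (hA : A.IsSymm) (hM : M.IsSymm) (hq : q ⬝ᵥ M *ᵥ q = 1)
    (hQMQ : Qᵀ * M * Q = 1) (hQMq : (Qᵀ * M) *ᵥ q = 0) (y : Fin m → ℝ) :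
    Rq A M (Q *ᵥ y + q) = phiAux (Qᵀ * A * Q) ((Qᵀ * A) *ᵥ q) (Rq A M q) y := by
  have hRq : Rq A M q = q ⬝ᵥ A *ᵥ q := by rw [Rq, hq, div_one]
  rw [hRq, phiAux, Rq, affine_dotProduct_mulVec_affine_of_isSymm hA,
    affine_dotProduct_mulVec_affine_of_orthonormal hM hq hQMQ hQMq]

lemma gradPhi_eq_transpose_mulVec_gradRq_affine (hA : A.IsSymm) (hM : M.IsSymm)
    (hq : q ⬝ᵥ M *ᵥ q = 1) (hQMQ : Qᵀ * M * Q = 1) (hQMq : (Qᵀ * M) *ᵥ q = 0) (y : Fin m → ℝ) :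
    gradPhi (Qᵀ * A * Q) ((Qᵀ * A) *ᵥ q) (Rq A M q) y = Qᵀ *ᵥ gradRq A M (Q *ᵥ y + q) := by
  have hQM : Qᵀ *ᵥ (M *ᵥ (Q *ᵥ y + q)) = y := by
    rw [transpose_mulVec_mulVec_affine, hQMQ, hQMq, one_mulVec, add_zero]
  rw [gradPhi, gradRq, affine_dotProduct_mulVec_affine_of_orthonormal hM hq hQMQ hQMq,
    Rq_affine_eq_phiAux hA hM hq hQMQ hQMq, mulVec_smul, mulVec_sub, mulVec_smul, hQM,
    transpose_mulVec_mulVec_affine, sub_add_eq_add_sub]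

end Chart

theorem stmt_7_general {n m : ℕ} {A M : Matrix (Fin n) (Fin n) ℝ}
    (hA : A.IsSymm) (hM : M.IsSymm) {q : Fin n → ℝ} {Q : Matrix (Fin n) (Fin m) ℝ}
    (hq : q ⬝ᵥ (M *ᵥ q) = 1) (hQMQ : Qᵀ * M * Q = 1) (hQMq : (Qᵀ * M) *ᵥ q = 0)
    {B : Matrix (Fin m) (Fin m) ℝ} (hB : B = Qᵀ * A * Q)
    {b : Fin m → ℝ} (hb : b = (Qᵀ * A) *ᵥ q) {ρq : ℝ} (hρq : ρq = Rq A M q) (y : Fin m → ℝ) :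
    gradPhi B b ρq y =
      (Real.sqrt (1 + y ⬝ᵥ y))⁻¹ •
        (Qᵀ *ᵥ ((2 : ℝ) • (A *ᵥ psiDag M q Q y -
          Rq A M (psiDag M q Q y) • (M *ᵥ psiDag M q Q y)))) := by
  subst hB hb hρq
  set x := Q *ᵥ y + q with hx
  have hxx : x ⬝ᵥ M *ᵥ x = y ⬝ᵥ y + 1 :=
    affine_dotProduct_mulVec_affine_of_orthonormal hM hq hQMQ hQMq y
  have hpos : 0 < x ⬝ᵥ M *ᵥ x := by
    have hyy : 0 ≤ y ⬝ᵥ y := dotProduct_self_star_nonneg y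
    linarith
  have hnorm : Mnorm M x ≠ 0 := (Real.sqrt_pos.mpr hpos).ne'
  have hunit : psiDag M q Q y ⬝ᵥ M *ᵥ psiDag M q Q y = 1 :=
    normalize_dotProduct_mulVec_normalize hpos
  calc gradPhi (Qᵀ * A * Q) ((Qᵀ * A) *ᵥ q) (Rq A M q) y
      = Qᵀ *ᵥ gradRq A M x := gradPhi_eq_transpose_mulVec_gradRq_affine hA hM hq hQMQ hQMq y
    _ = Qᵀ *ᵥ gradRq A M (Mnorm M x • psiDag M q Q y) := by
      rw [psiDag, ← hx, smul_inv_smul₀ hnorm]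
    _ = (Mnorm M x)⁻¹ • Qᵀ *ᵥ gradRq A M (psiDag M q Q y) := by
      rw [gradRq_smul A M hnorm, mulVec_smul]
    _ = _ := by
      rw [gradRq_of_dotProduct_mulVec_eq_one A hunit, Mnorm, hxx, add_comm (y ⬝ᵥ y)]

/-- For any y ∈ ℝ^{n−1} with x = ψ†(y):
∇φ(y) = Qᵀ∇Rq(x)/√(1+‖y‖²), where ∇Rq(x) = 2(Ax − Rq(x)Mx). -/
theorem stmt_7 (n : ℕ)
    (A M : Matrix (Fin (n+2)) (Fin (n+2)) ℝ)
    (hA : A.PosDef) (hM : M.PosDef)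
    (q : Fin (n+2) → ℝ) (Q : Matrix (Fin (n+2)) (Fin (n+1)) ℝ)
    (hq1 : q ⬝ᵥ (M *ᵥ q) = 1)
    (hQMQ : Qᵀ * M * Q = 1)
    (hQMq : (Qᵀ * M) *ᵥ q = 0)
    (B : Matrix (Fin (n+1)) (Fin (n+1)) ℝ) (hB : B = Qᵀ * A * Q)
    (b : Fin (n+1) → ℝ) (hb : b = (Qᵀ * A) *ᵥ q)
    (ρq : ℝ) (hρq : ρq = Rq A M q) :
    ∀ y : Fin (n+1) → ℝ,
      gradPhi B b ρq y =
        (Real.sqrt (1 + y ⬝ᵥ y))⁻¹ •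
          (Qᵀ *ᵥ ((2 : ℝ) • (A *ᵥ psiDag M q Q y -
            Rq A M (psiDag M q Q y) • (M *ᵥ psiDag M q Q y)))) := 
  stmt_7_general (isHermitian_iff_isSymm.mp hA.isHermitian)
    (isHermitian_iff_isSymm.mp hM.isHermitian) hq1 hQMQ hQMq hB hb hρq
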